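/- Given a consistent belief system on the tree T and the tree-factorized distribution b(x) = ( ∏_{{i,j}∈E(T)} b_{ij}(x_i, x_j) ) · ∏_{i∈V} b_i(x_i)^{1 - deg(i)}, the Bethe free energy of the belief system equals the variational free energy of b: F_B = Σ_x b(x) · ln( b(x) / p̃(x) ). -/

import Mathlib

open Finset

/-- The tree-factorized distribution
`b(x) = (Π_{{i,j} ∈ E(T)} b_{ij}(x_i, x_j)) · Π_i b_i(x_i)^{1 - deg(i)}`
built from node beliefs `b1` and (symmetric) pairwise beliefs `b2`. -/
noncomputable def treeFactorized {V : Type*} [Fintype V] [DecidableEq V]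
    {X : V → Type*} (T : SimpleGraph V) [DecidableRel T.Adj]
    (b1 : (i : V) → X i → ℝ) (b2 : (i j : V) → X i → X j → ℝ)
    (hsym : ∀ i j s t, b2 i j s t = b2 j i t s)
    (x : (i : V) → X i) : ℝ :=
  (∏ e ∈ T.edgeFinset,
      Sym2.lift ⟨fun i j => b2 i j (x i) (x j), fun i j => hsym i j (x i) (x j)⟩ e)
    * ∏ i : V, b1 i (x i) ^ ((1 : ℤ) - T.degree i)

/-- The per-edge Bethe term `Σ_{s,t} b_{ij}(s,t) · ln (b_{ij}(s,t) / ψ_{ij}(s,t))`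
is a symmetric function of the (ordered) edge, hence descends to `Sym2 V`. -/
theorem betheEdgeTerm_symm {V : Type*} {X : V → Type*} [∀ i, Fintype (X i)]
    (b2 ψ2 : (i j : V) → X i → X j → ℝ)
    (hbsym : ∀ i j s t, b2 i j s t = b2 j i t s)
    (hψsym : ∀ i j s t, ψ2 i j s t = ψ2 j i t s) (i j : V) :
    (∑ s : X i, ∑ t : X j, b2 i j s t * Real.log (b2 i j s t / ψ2 i j s t))
      = ∑ t : X j, ∑ s : X i, b2 j i t s * Real.log (b2 j i t s / ψ2 j i t s) := by
  rw [Finset.sum_comm]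
  exact Finset.sum_congr rfl fun t _ => Finset.sum_congr rfl fun s _ => by
    rw [hbsym, hψsym]

/-- The Bethe free energy of a belief system `(b1, b2)` relative to edge
potentials `ψ2` on the tree `T`:
`F_B = Σ_{{i,j}∈E(T)} Σ_{s,t} b_{ij}(s,t) ln (b_{ij}(s,t)/ψ_{ij}(s,t))
       - Σ_i (deg(i) - 1) Σ_s b_i(s) ln b_i(s)`. -/
noncomputable def betheFreeEnergy {V : Type*} [Fintype V] [DecidableEq V]
    {X : V → Type*} [∀ i, Fintype (X i)] (T : SimpleGraph V) [DecidableRel T.Adj]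
    (b1 : (i : V) → X i → ℝ) (b2 ψ2 : (i j : V) → X i → X j → ℝ)
    (hbsym : ∀ i j s t, b2 i j s t = b2 j i t s)
    (hψsym : ∀ i j s t, ψ2 i j s t = ψ2 j i t s) : ℝ :=
  (∑ e ∈ T.edgeFinset,
      Sym2.lift ⟨fun i j => ∑ s : X i, ∑ t : X j,
          b2 i j s t * Real.log (b2 i j s t / ψ2 i j s t),
        betheEdgeTerm_symm b2 ψ2 hbsym hψsym⟩ e)
    - ∑ i : V, ((T.degree i : ℝ) - 1) * ∑ s : X i, b1 i s * Real.log (b1 i s)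

/-- The unnormalized pairwise MRF `p̃(x) = Π_{{i,j}∈E(T)} ψ_{ij}(x_i, x_j)`. -/
noncomputable def treePotentialProd {V : Type*} [Fintype V] [DecidableEq V]
    {X : V → Type*} (T : SimpleGraph V) [DecidableRel T.Adj]
    (ψ2 : (i j : V) → X i → X j → ℝ)
    (hψsym : ∀ i j s t, ψ2 i j s t = ψ2 j i t s)
    (x : (i : V) → X i) : ℝ :=
  ∏ e ∈ T.edgeFinset,
    Sym2.lift ⟨fun i j => ψ2 i j (x i) (x j), fun i j => hψsym i j (x i) (x j)⟩ e
namespace BetheAux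

lemma sum_congr_update {V : Type*} [Fintype V] [DecidableEq V]
    {X : V → Type*} [∀ i, Fintype (X i)] [∀ i, Nonempty (X i)] (v : V)
    (F G : ((i : V) → X i) → ℝ)
    (h : ∀ x, ∑ s, F (Function.update x v s) = ∑ s, G (Function.update x v s)) :
    ∑ x, F x = ∑ x, G x := by
  have key : ∀ H : ((i : V) → X i) → ℝ, ∑ x, H x =
      ∑ y : ((j : {j // j ≠ v}) → X j), ∑ s : X v,
        H (Function.update ((Equiv.piSplitAt v X).symm (Classical.arbitrary _, y)) v s) := by
    intro H
    rw [← (Equiv.piSplitAt v X).symm.sum_comp, Fintype.sum_prod_type_right]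
    refine Finset.sum_congr rfl fun y _ => Finset.sum_congr rfl fun s _ => ?_
    congr 1
    funext i
    by_cases hi : i = v
    · subst hi
      simp [Equiv.piSplitAt]
    · simp [Equiv.piSplitAt, hi]
  rw [key F, key G]
  exact Finset.sum_congr rfl fun y _ => h _

/-- averaging over one coordinate does not change the product expectation -/
lemma expect_update {V : Type*} [Fintype V] [DecidableEq V]
    {X : V → Type*} [∀ i, Fintype (X i)] [∀ i, Nonempty (X i)]
    (b1 : (i : V) → X i → ℝ) (hb1sum : ∀ i, ∑ s, b1 i s = 1) (v : V)
    (φ : ((i : V) → X i) → ℝ) :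
    ∑ x : (i : V) → X i, (∏ i, b1 i (x i)) * φ x =
      ∑ x : (i : V) → X i, (∏ i, b1 i (x i)) * ∑ s, b1 v s * φ (Function.update x v s) := by
  apply sum_congr_update v
  intro x
  have hP : ∀ s, ∏ i, b1 i (Function.update x v s i) =
      b1 v s * ∏ i ∈ univ.erase v, b1 i (x i) := by
    intro s
    rw [← Finset.mul_prod_erase univ _ (Finset.mem_univ v)]
    simp only [Function.update_self]
    congr 1
    refine Finset.prod_congr rfl fun i hi => ?_
    rw [Function.update_of_ne (Finset.ne_of_mem_erase hi)]
  simp only [hP, Function.update_idem]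
  rw [← Finset.sum_mul, ← Finset.sum_mul, hb1sum, one_mul, Finset.mul_sum]
  exact Finset.sum_congr rfl fun s _ => by ring

lemma expect_const {V : Type*} [Fintype V] [DecidableEq V]
    {X : V → Type*} [∀ i, Fintype (X i)]
    (b1 : (i : V) → X i → ℝ) (hb1sum : ∀ i, ∑ s, b1 i s = 1) (c : ℝ) :
    ∑ x : (i : V) → X i, (∏ i, b1 i (x i)) * c = c := by
  rw [← Finset.sum_mul]
  have := Finset.prod_univ_sum (fun i => (univ : Finset (X i))) b1
  rw [Fintype.piFinset_univ] at this
  rw [← this]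
  simp [hb1sum]

/-- the edge ratio -/
noncomputable def ratio {V : Type*} {X : V → Type*}
    (b1 : (i : V) → X i → ℝ) (b2 : (i j : V) → X i → X j → ℝ) (i j : V)
    (x : (i : V) → X i) : ℝ :=
  b2 i j (x i) (x j) / (b1 i (x i) * b1 j (x j))

lemma eliminate {V : Type*} [Fintype V] [DecidableEq V]
    {X : V → Type*} [∀ i, Fintype (X i)] [∀ i, Nonempty (X i)]
    (T : SimpleGraph V)
    (b1 : (i : V) → X i → ℝ) (b2 : (i j : V) → X i → X j → ℝ)
    (hb1pos : ∀ i s, 0 < b1 i s) (hb1sum : ∀ i, ∑ s, b1 i s = 1)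
    (hbsym : ∀ i j s t, b2 i j s t = b2 j i t s)
    (hmarg : ∀ i j, T.Adj i j → ∀ s : X i, ∑ t : X j, b2 i j s t = b1 i s)
    (p : V → V) (d : V → ℕ) (S : Finset V)
    (f : ((i : V) → X i) → ℝ)
    (hS : ∀ v ∈ S, T.Adj v (p v) ∧ d (p v) < d v)
    (hf : ∀ v ∈ S, ∀ x s, f (Function.update x v s) = f x) :
    ∑ x : (i : V) → X i, (∏ i, b1 i (x i)) * (f x * ∏ v ∈ S, ratio b1 b2 v (p v) x) =
      ∑ x : (i : V) → X i, (∏ i, b1 i (x i)) * f x := by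
  induction S using Finset.induction_on_max_value d with
  | empty => simp
  | insert v S hvS hmax ih =>
    rw [← ih (fun u hu => hS u (Finset.mem_insert_of_mem hu))
      (fun u hu => hf u (Finset.mem_insert_of_mem hu)), expect_update b1 hb1sum v]
    refine Finset.sum_congr rfl fun x _ => ?_
    congr 1
    obtain ⟨hadj, hlt⟩ := hS v (Finset.mem_insert_self _ _)
    have hne : p v ≠ v := fun h => by rw [h] at hlt; exact lt_irrefl _ hlt
    have hrest : ∀ s, ∏ u ∈ S, ratio b1 b2 u (p u) (Function.update x v s) =
        ∏ u ∈ S, ratio b1 b2 u (p u) x := by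
      intro s
      refine Finset.prod_congr rfl fun u hu => ?_
      have h1 : u ≠ v := fun h => hvS (h ▸ hu)
      have h2 : p u ≠ v := fun h => by
        have := (hS u (Finset.mem_insert_of_mem hu)).2
        rw [h] at this
        exact absurd (hmax u hu) (not_le.mpr this)
      simp only [ratio, Function.update_of_ne h1, Function.update_of_ne h2]
    have hone : ∑ s, b1 v s * ratio b1 b2 v (p v) (Function.update x v s) = 1 := by
      have : ∀ s, b1 v s * ratio b1 b2 v (p v) (Function.update x v s) =
          b2 (p v) v (x (p v)) s / b1 (p v) (x (p v)) := by
        intro s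
        simp only [ratio, Function.update_self, Function.update_of_ne hne]
        rw [hbsym]
        have := (hb1pos v s).ne'
        have := (hb1pos (p v) (x (p v))).ne'
        field_simp
      rw [Finset.sum_congr rfl fun s _ => this s, ← Finset.sum_div, hmarg _ _ hadj.symm,
        div_self (hb1pos _ _).ne']
    calc _ = ∑ s, (b1 v s * ratio b1 b2 v (p v) (Function.update x v s)) *
          (f x * ∏ u ∈ S, ratio b1 b2 u (p u) x) := by
          refine Finset.sum_congr rfl fun s _ => ?_
          rw [Finset.prod_insert hvS, hrest, hf v (Finset.mem_insert_self _ _)]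
          ring
      _ = _ := by rw [← Finset.sum_mul, hone, one_mul]

lemma prod_edge_degree {V : Type*} [Fintype V] [DecidableEq V]
    (T : SimpleGraph V) [DecidableRel T.Adj] (g : V → ℝ) :
    ∏ e ∈ T.edgeFinset, Sym2.lift ⟨fun i j => g i * g j, fun i j => mul_comm _ _⟩ e
      = ∏ i, g i ^ T.degree i := by
  have h1 : ∀ e ∈ T.edgeFinset,
      Sym2.lift ⟨fun i j => g i * g j, fun i j => mul_comm _ _⟩ e
        = ∏ i, if i ∈ e then g i else 1 := by
    intro e he
    induction e using Sym2.ind with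
    | _ i j =>
      have hij : i ≠ j := (SimpleGraph.mem_edgeFinset.mp he : T.Adj i j).ne
      rw [← Finset.prod_filter]
      have : (univ.filter fun k => k ∈ s(i, j)) = {i, j} := by
        ext k; simp
      rw [this, Finset.prod_pair hij]
      rfl
  rw [Finset.prod_congr rfl h1, Finset.prod_comm]
  refine Finset.prod_congr rfl fun i _ => ?_
  rw [← Finset.prod_filter, Finset.prod_const, ← T.card_incidenceFinset_eq_degree,
    T.incidenceFinset_eq_filter]

lemma exists_parent {V : Type*} [Fintype V] [DecidableEq V]
    (T : SimpleGraph V) [DecidableRel T.Adj] (hT : T.IsTree) (r : V) :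
    ∃ p : V → V, (∀ v, v ≠ r → T.Adj v (p v) ∧ T.dist r (p v) < T.dist r v) ∧
      Set.InjOn (fun v => s(v, p v)) (univ.erase r : Finset V) ∧
      (univ.erase r).image (fun v => s(v, p v)) = T.edgeFinset := by
  have h : ∀ v, ∃ w, v ≠ r → T.Adj v w ∧ T.dist r w < T.dist r v := by
    intro v
    by_cases hv : v = r
    · exact ⟨v, fun h => absurd hv h⟩
    obtain ⟨q, hq⟩ := hT.connected.exists_walk_length_eq_dist v r
    cases q with
    | nil => exact absurd rfl hv
    | @cons _ w _ hadj q =>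
      refine ⟨w, fun _ => ⟨hadj, ?_⟩⟩
      rw [T.dist_comm, T.dist_comm (u := r), ← hq, SimpleGraph.Walk.length_cons]
      exact Nat.lt_succ_of_le (SimpleGraph.dist_le q)
  choose p hp using h
  have hinj : Set.InjOn (fun v => s(v, p v)) (univ.erase r : Finset V) := by
    intro u hu v hv huv
    have hu' := hp u (by simpa using hu)
    have hv' := hp v (by simpa using hv)
    simp only [Sym2.eq_iff] at huv
    rcases huv with ⟨h, _⟩ | ⟨h1, h2⟩
    · exact h
    · rw [h2] at hu'
      rw [← h1] at hv'
      exact absurd (hu'.2.trans hv'.2) (lt_irrefl _)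
  refine ⟨p, hp, hinj, ?_⟩
  apply Finset.eq_of_subset_of_card_le
  · intro e he
    obtain ⟨v, hv, rfl⟩ := Finset.mem_image.mp he
    exact SimpleGraph.mem_edgeFinset.mpr (hp v (by simpa using hv)).1
  · rw [Finset.card_image_of_injOn hinj, Finset.card_erase_of_mem (Finset.mem_univ _),
      Finset.card_univ, ← hT.card_edgeFinset]
    simp

lemma treeFactorized_eq {V : Type*} [Fintype V] [DecidableEq V]
    {X : V → Type*} (T : SimpleGraph V) [DecidableRel T.Adj]
    (b1 : (i : V) → X i → ℝ) (b2 : (i j : V) → X i → X j → ℝ)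
    (hb1pos : ∀ i s, 0 < b1 i s)
    (hbsym : ∀ i j s t, b2 i j s t = b2 j i t s) (r : V) (p : V → V)
    (hinj : Set.InjOn (fun v => s(v, p v)) (univ.erase r : Finset V))
    (him : (univ.erase r).image (fun v => s(v, p v)) = T.edgeFinset)
    (x : (i : V) → X i) :
    treeFactorized T b1 b2 hbsym x =
      (∏ i, b1 i (x i)) * ∏ v ∈ univ.erase r, ratio b1 b2 v (p v) x := by
  have hd := prod_edge_degree T (fun i => b1 i (x i))
  unfold treeFactorized
  have h2 : ∏ i, b1 i (x i) ^ ((1 : ℤ) - T.degree i) =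
      (∏ i, b1 i (x i)) / ∏ i, b1 i (x i) ^ T.degree i := by
    rw [← Finset.prod_div_distrib]
    refine Finset.prod_congr rfl fun i _ => ?_
    rw [zpow_sub₀ (hb1pos _ _).ne', zpow_one, zpow_natCast]
  rw [h2, ← hd, ← him, Finset.prod_image hinj, Finset.prod_image hinj]
  simp only [Sym2.lift_mk, ratio, Finset.prod_div_distrib]
  ring

lemma node_marginal {V : Type*} [Fintype V] [DecidableEq V]
    {X : V → Type*} [∀ i, Fintype (X i)] [∀ i, Nonempty (X i)]
    (T : SimpleGraph V) [DecidableRel T.Adj] (hT : T.IsTree)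
    (b1 : (i : V) → X i → ℝ) (b2 : (i j : V) → X i → X j → ℝ)
    (hb1pos : ∀ i s, 0 < b1 i s) (hb1sum : ∀ i, ∑ s, b1 i s = 1)
    (hbsym : ∀ i j s t, b2 i j s t = b2 j i t s)
    (hmarg : ∀ i j, T.Adj i j → ∀ s : X i, ∑ t : X j, b2 i j s t = b1 i s)
    (r : V) (f : X r → ℝ) :
    ∑ x : (i : V) → X i, treeFactorized T b1 b2 hbsym x * f (x r) = ∑ s, b1 r s * f s := by
  obtain ⟨p, hp, hinj, him⟩ := exists_parent T hT r
  have h := eliminate T b1 b2 hb1pos hb1sum hbsym hmarg p (T.dist r) (univ.erase r)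
    (fun x => f (x r)) (fun v hv => hp v (Finset.ne_of_mem_erase hv))
    (fun v hv x s => by rw [Function.update_of_ne (Finset.ne_of_mem_erase hv).symm])
  have h2 := expect_update b1 hb1sum r (fun x => f (x r))
  simp only [Function.update_self] at h2
  rw [expect_const b1 hb1sum] at h2
  rw [← h2, ← h]
  refine Finset.sum_congr rfl fun x _ => ?_
  rw [treeFactorized_eq T b1 b2 hb1pos hbsym r p hinj him]
  ring

lemma edge_marginal {V : Type*} [Fintype V] [DecidableEq V]
    {X : V → Type*} [∀ i, Fintype (X i)] [∀ i, Nonempty (X i)]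
    (T : SimpleGraph V) [DecidableRel T.Adj] (hT : T.IsTree)
    (b1 : (i : V) → X i → ℝ) (b2 : (i j : V) → X i → X j → ℝ)
    (hb1pos : ∀ i s, 0 < b1 i s) (hb1sum : ∀ i, ∑ s, b1 i s = 1)
    (hbsym : ∀ i j s t, b2 i j s t = b2 j i t s)
    (hmarg : ∀ i j, T.Adj i j → ∀ s : X i, ∑ t : X j, b2 i j s t = b1 i s)
    (r j : V) (hrj : T.Adj r j) (f : X r → X j → ℝ) :
    ∑ x : (i : V) → X i, treeFactorized T b1 b2 hbsym x * f (x r) (x j) =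
      ∑ s, ∑ t, b2 r j s t * f s t := by
  obtain ⟨p, hp, hinj, him⟩ := exists_parent T hT r
  have hpj : p j = r := by
    have h1 := (hp j hrj.ne').2
    rw [SimpleGraph.dist_eq_one_iff_adj.mpr hrj, Nat.lt_one_iff,
      hT.connected.dist_eq_zero_iff] at h1
    exact h1.symm
  have hjr : j ≠ r := hrj.ne'
  have h := eliminate T b1 b2 hb1pos hb1sum hbsym hmarg p (T.dist r) ((univ.erase r).erase j)
    (fun x => f (x r) (x j) * ratio b1 b2 j r x)
    (fun v hv => hp v (Finset.ne_of_mem_erase (Finset.mem_of_mem_erase hv)))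
    (fun v hv x s => by
      have h1 : j ≠ v := (Finset.ne_of_mem_erase hv).symm
      have h2 : r ≠ v := (Finset.ne_of_mem_erase (Finset.mem_of_mem_erase hv)).symm
      simp only [ratio, Function.update_of_ne h1, Function.update_of_ne h2])
  have hmem : j ∈ univ.erase r := Finset.mem_erase.mpr ⟨hjr, Finset.mem_univ _⟩
  trans ∑ x : (i : V) → X i, (∏ i, b1 i (x i)) * (f (x r) (x j) * ratio b1 b2 j r x)
  · rw [← h]
    refine Finset.sum_congr rfl fun x _ => ?_
    rw [treeFactorized_eq T b1 b2 hb1pos hbsym r p hinj him,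
      ← Finset.mul_prod_erase _ _ hmem, hpj]
    ring
  · rw [expect_update b1 hb1sum j, expect_update b1 hb1sum r]
    simp only [ratio, Function.update_self, Function.update_of_ne hjr.symm]
    rw [expect_const b1 hb1sum]
    refine Finset.sum_congr rfl fun s _ => ?_
    rw [Finset.mul_sum]
    refine Finset.sum_congr rfl fun t _ => ?_
    rw [hbsym j r]
    have := (hb1pos r s).ne'
    have := (hb1pos j t).ne'
    field_simp

end BetheAux

/-- **Bethe free energy as a variational free energy on a tree.**
Given a consistent belief system on the tree `T` and the tree-factorized
distribution `b`, the Bethe free energy of the belief system equals the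
variational free energy of `b`: `F_B = Σ_x b(x) · ln (b(x) / p̃(x))`. -/
theorem betheFreeEnergy_eq_variational (V : Type*) [Fintype V] [DecidableEq V] [Nonempty V]
    (X : V → Type*) [∀ i, Fintype (X i)] [∀ i, Nonempty (X i)]
    (T : SimpleGraph V) [DecidableRel T.Adj] (hT : T.IsTree)
    (ψ2 : (i j : V) → X i → X j → ℝ)
    (hψsym : ∀ i j s t, ψ2 i j s t = ψ2 j i t s)
    (hψpos : ∀ i j, T.Adj i j → ∀ s t, 0 < ψ2 i j s t)
    (b1 : (i : V) → X i → ℝ) (b2 : (i j : V) → X i → X j → ℝ)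
    (hb1pos : ∀ i s, 0 < b1 i s) (hb1sum : ∀ i, ∑ s, b1 i s = 1)
    (hbsym : ∀ i j s t, b2 i j s t = b2 j i t s)
    (hb2pos : ∀ i j, T.Adj i j → ∀ s t, 0 < b2 i j s t)
    (hb2sum : ∀ i j, T.Adj i j → ∑ s : X i, ∑ t : X j, b2 i j s t = 1)
    (hmarg : ∀ i j, T.Adj i j → ∀ s : X i, ∑ t : X j, b2 i j s t = b1 i s) :
    betheFreeEnergy T b1 b2 ψ2 hbsym hψsym
      = ∑ x : (i : V) → X i, treeFactorized T b1 b2 hbsym x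
          * Real.log (treeFactorized T b1 b2 hbsym x / treePotentialProd T ψ2 hψsym x) := by
  have hlog : ∀ x : (i : V) → X i,
      Real.log (treeFactorized T b1 b2 hbsym x / treePotentialProd T ψ2 hψsym x) =
      (∑ e ∈ T.edgeFinset, Sym2.lift ⟨fun i j => Real.log (b2 i j (x i) (x j) / ψ2 i j (x i) (x j)),
        fun i j => by beta_reduce; rw [hbsym i j, hψsym i j]⟩ e)
      - ∑ i, ((T.degree i : ℝ) - 1) * Real.log (b1 i (x i)) := by
    intro x
    have hpos2 : ∀ e ∈ T.edgeFinset, 0 < Sym2.lift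
        ⟨fun i j => b2 i j (x i) (x j), fun i j => hbsym i j (x i) (x j)⟩ e := by
      intro e he
      induction e using Sym2.ind with
      | _ i j => exact hb2pos i j (SimpleGraph.mem_edgeFinset.mp he) _ _
    have hposψ : ∀ e ∈ T.edgeFinset, 0 < Sym2.lift
        ⟨fun i j => ψ2 i j (x i) (x j), fun i j => hψsym i j (x i) (x j)⟩ e := by
      intro e he
      induction e using Sym2.ind with
      | _ i j => exact hψpos i j (SimpleGraph.mem_edgeFinset.mp he) _ _
    have hpos1 : ∀ i ∈ (univ : Finset V), b1 i (x i) ^ ((1 : ℤ) - T.degree i) ≠ 0 :=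
      fun i _ => (zpow_pos (hb1pos _ _) _).ne'
    unfold treeFactorized treePotentialProd
    rw [Real.log_div (mul_ne_zero (Finset.prod_pos hpos2).ne' (Finset.prod_ne_zero_iff.mpr hpos1))
      (Finset.prod_pos hposψ).ne', Real.log_mul (Finset.prod_pos hpos2).ne'
      (Finset.prod_ne_zero_iff.mpr hpos1), Real.log_prod (fun e he => (hpos2 e he).ne'),
      Real.log_prod hpos1, Real.log_prod (fun e he => (hposψ e he).ne')]
    have e1 : ∑ i, Real.log (b1 i (x i) ^ ((1 : ℤ) - T.degree i)) =
        - ∑ i, ((T.degree i : ℝ) - 1) * Real.log (b1 i (x i)) := by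
      rw [← Finset.sum_neg_distrib]
      refine Finset.sum_congr rfl fun i _ => ?_
      rw [Real.log_zpow]
      push_cast
      ring
    have e2 : (∑ e ∈ T.edgeFinset, Sym2.lift
        ⟨fun i j => Real.log (b2 i j (x i) (x j) / ψ2 i j (x i) (x j)),
        fun i j => by beta_reduce; rw [hbsym i j, hψsym i j]⟩ e) =
        (∑ e ∈ T.edgeFinset, Real.log (Sym2.lift
          ⟨fun i j => b2 i j (x i) (x j), fun i j => hbsym i j (x i) (x j)⟩ e)) -
        ∑ e ∈ T.edgeFinset, Real.log (Sym2.lift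
          ⟨fun i j => ψ2 i j (x i) (x j), fun i j => hψsym i j (x i) (x j)⟩ e) := by
      rw [← Finset.sum_sub_distrib]
      refine Finset.sum_congr rfl fun e he => ?_
      rw [← Real.log_div (hpos2 e he).ne' (hposψ e he).ne']
      induction e using Sym2.ind with
      | _ i j => rfl
    rw [e1, e2]
    ring
  simp only [hlog, mul_sub, Finset.sum_sub_distrib, Finset.mul_sum]
  unfold betheFreeEnergy
  rw [Finset.sum_comm, Finset.sum_comm (s := (univ : Finset ((i : V) → X i)))]
  congr 1
  · refine Finset.sum_congr rfl fun e he => ?_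
    induction e using Sym2.ind with
    | _ i j =>
      exact (BetheAux.edge_marginal T hT b1 b2 hb1pos hb1sum hbsym hmarg i j
        (SimpleGraph.mem_edgeFinset.mp he)
        (fun s t => Real.log (b2 i j s t / ψ2 i j s t))).symm
  · refine Finset.sum_congr rfl fun i _ => ?_
    rw [← BetheAux.node_marginal T hT b1 b2 hb1pos hb1sum hbsym hmarg i
      (fun s => Real.log (b1 i s)), Finset.mul_sum]
    exact Finset.sum_congr rfl fun x _ => by ring
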